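/- arXiv:1811.04501 — 2 statements merged into one kernel-verified Lean document; each statement's English description precedes it below -/
import Mathlib

section
/- Let G be the set of smooth maps γ : ℝ → ℝ with γ'(θ) > 0 and γ(θ+2π) = γ(θ)+2π for all θ, and γ(π) = π. For n ≥ 1 let B_n be the set of γ ∈ G with γ'(π) = 1 and γ^{(k)}(π) = 0 for all 2 ≤ k ≤ n. Then: (i) G is a group under composition (each γ ∈ G is a bijection of ℝ whose inverse again lies in G); (ii) each B_n is a subgroup of G; and (iii) B_n is normal in G, i.e. for every γ ∈ B_n and γ₀ ∈ G one has γ₀ ∘ γ ∘ γ₀^{-1} ∈ B_n. -/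
open scoped Real

/-- Lifts of smooth orientation-preserving circle diffeomorphisms fixing `-1`
(i.e. fixing `θ = π`). -/
def CircG : Set (ℝ → ℝ) :=
  {γ | ContDiff ℝ (⊤ : ℕ∞) γ ∧ (∀ θ : ℝ, 0 < deriv γ θ) ∧
       (∀ θ : ℝ, γ (θ + 2 * π) = γ θ + 2 * π) ∧ γ π = π}

/-- The subgroup `B_n`: elements of `CircG` with derivative `1` at `π` and vanishing
`k`-th derivatives at `π` for `2 ≤ k ≤ n`. -/
def CircB (n : ℕ) : Set (ℝ → ℝ) :=
  {γ ∈ CircG | deriv γ π = 1 ∧ ∀ k : ℕ, 2 ≤ k → k ≤ n → iteratedDeriv k γ π = 0}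

/-!
A map `γ` in `CircG` fixes every `π + 2πk`, so it is unbounded in both directions and hence
a bijection; positivity of `γ'` makes its inverse smooth. Once `n ≥ 1`, membership in `CircB n`
says that `γ` has the same `n`-jet at `π` as the identity. By Faà di Bruno's formula the `n`-jet of
a composition depends only on the `n`-jets of its factors, so taking `n`-jets at the common fixed
point `π` is multiplicative and `CircB n` is its kernel.
-/

open Function

section Inverse

theorem surjective_of_continuous_of_map_add_const {G H : Type*} [AddGroup G] [TopologicalSpace G]
    [PreconnectedSpace G] [AddCommGroup H] [LinearOrder H] [IsOrderedAddMonoid H] [Archimedean H]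
    [TopologicalSpace H] [OrderClosedTopology H] {f : G → H} {a : G} {b : H} (hf : Continuous f)
    (hb : 0 < b) (hadd : ∀ x, f (x + a) = f x + b) : Surjective f := by
  intro y
  let F : AddConstMap G H a b := ⟨f, hadd⟩
  obtain ⟨m, hm⟩ := Archimedean.arch (f 0 - y) hb
  obtain ⟨n, hn⟩ := Archimedean.arch (y - f 0) hb
  have below : f (0 - m • a) ≤ y :=
    (AddConstMapClass.map_sub_nsmul F 0 m).trans_le (sub_le_comm.mp hm)
  have above : y ≤ f (0 + n • a) :=
    (sub_le_iff_le_add'.mp hn).trans_eq (AddConstMapClass.map_add_nsmul F 0 n).symm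
  exact mem_range_of_exists_le_of_exists_ge hf ⟨_, below⟩ ⟨_, above⟩

variable {f g : ℝ → ℝ}

theorem contDiff_of_rightInverse_of_deriv_pos {n : WithTop ℕ∞} (hf : ContDiff ℝ n f)
    (hf' : ∀ x, 0 < deriv f x) (hg : RightInverse g f) : ContDiff ℝ n g := by
  let e : ℝ ≃ₜ ℝ :=
    ((strictMono_of_deriv_pos hf').orderIsoOfSurjective f hg.surjective).toHomeomorph
  have symm_eq : e.symm = g := funext fun y ↦ e.symm_apply_eq.mpr (hg y).symm
  rw [← symm_eq]
  exact e.contDiff_symm_deriv (fun x ↦ (hf' x).ne')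
    (fun x ↦ (differentiableAt_of_deriv_ne_zero (hf' x).ne').hasDerivAt) hf

theorem deriv_pos_of_rightInverse (hf' : ∀ x, 0 < deriv f x) (hgc : Continuous g)
    (hg : RightInverse g f) (y : ℝ) : 0 < deriv g y := by
  have hasDerivAt_f : HasDerivAt f (deriv f (g y)) (g y) :=
    (differentiableAt_of_deriv_ne_zero (hf' _).ne').hasDerivAt
  rw [(hasDerivAt_f.of_local_left_inverse hgc.continuousAt (hf' _).ne' (.of_forall hg)).deriv]
  exact inv_pos.mpr (hf' _)

end Inverse

section Jet

variable {𝕜 E : Type*} [NontriviallyNormedField 𝕜] [NormedAddCommGroup E] [NormedSpace 𝕜 E]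

/-- Equality of the `n`-jets of `f` and `g` at `x`, encoded as equality of all iterated derivatives
of order at most `n`. It is meaningful for functions that are `n` times differentiable at `x`. -/
def JetEq (n : ℕ) (f g : 𝕜 → E) (x : 𝕜) : Prop :=
  ∀ k ≤ n, iteratedDeriv k f x = iteratedDeriv k g x

namespace JetEq

variable {n : ℕ} {x : 𝕜}

theorem refl (n : ℕ) (f : 𝕜 → E) (x : 𝕜) : JetEq n f f x := fun _ _ ↦ rfl

theorem symm {f g : 𝕜 → E} (h : JetEq n f g x) : JetEq n g f x := fun k hk ↦ (h k hk).symm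

theorem eq {f g : 𝕜 → E} (h : JetEq n f g x) : f x = g x := by
  simpa only [iteratedDeriv_zero] using h 0 n.zero_le

theorem comp {g₁ g₂ : 𝕜 → E} {f₁ f₂ : 𝕜 → 𝕜} (hg : JetEq n g₁ g₂ (f₁ x)) (hf : JetEq n f₁ f₂ x)
    (hg₁ : ContDiffAt 𝕜 n g₁ (f₁ x)) (hg₂ : ContDiffAt 𝕜 n g₂ (f₁ x))
    (hf₁ : ContDiffAt 𝕜 n f₁ x) (hf₂ : ContDiffAt 𝕜 n f₂ x) :
    JetEq n (g₁ ∘ f₁) (g₂ ∘ f₂) x := by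
  intro k hk
  have hkn : (k : WithTop ℕ∞) ≤ n := mod_cast hk
  rw [iteratedDeriv_scomp_eq_sum_orderedFinpartition hg₁ hf₁ hkn,
    iteratedDeriv_scomp_eq_sum_orderedFinpartition (hf.eq ▸ hg₂) hf₂ hkn, ← hf.eq]
  refine Finset.sum_congr rfl fun c _ ↦ ?_
  rw [hg _ (c.length_le.trans hk),
    Finset.prod_congr rfl fun j _ ↦ hf _ ((c.partSize_le j).trans hk)]

variable {f g h : 𝕜 → 𝕜}

theorem id_of_leftInverse (hfid : JetEq n f id x) (hf : ContDiffAt 𝕜 n f x)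
    (hg : ContDiffAt 𝕜 n g x) (hgf : LeftInverse g f) : JetEq n g id x := by
  have hgfx : ContDiffAt 𝕜 n g (f x) := hfid.eq.symm ▸ hg
  have key : JetEq n (g ∘ f) (g ∘ id) x := (refl n g (f x)).comp hfid hgfx hgfx hf contDiffAt_id
  rw [hgf.comp_eq_id] at key
  exact key.symm

theorem conj_id (hfid : JetEq n f id (h x)) (hf : ContDiffAt 𝕜 n f (h x))
    (hg : ContDiffAt 𝕜 n g (h x)) (hh : ContDiffAt 𝕜 n h x) (hgh : RightInverse h g) :
    JetEq n (g ∘ f ∘ h) id x := by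
  have jet_fh : JetEq n (f ∘ h) h x := hfid.comp (refl n h x) hf contDiffAt_id hh hh
  have hgfx : ContDiffAt 𝕜 n g (f (h x)) := hfid.eq.symm ▸ hg
  have key : JetEq n (g ∘ f ∘ h) (g ∘ h) x :=
    (refl n g ((f ∘ h) x)).comp jet_fh hgfx hgfx (hf.comp x hh) hh
  rwa [hgh.comp_eq_id] at key

end JetEq

end Jet

section CircG

variable {γ γ₁ γ₂ δ : ℝ → ℝ}

theorem contDiff_of_mem_circG (hγ : γ ∈ CircG) (n : ℕ) : ContDiff ℝ n γ :=
  contDiff_infty.mp hγ.1 n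

theorem map_pi_of_mem_circG (hγ : γ ∈ CircG) : γ π = π := hγ.2.2.2

theorem id_mem_circG : id ∈ CircG :=
  ⟨contDiff_id, fun θ ↦ by simp only [deriv_id, zero_lt_one], fun _ ↦ rfl, rfl⟩

theorem comp_mem_circG (hγ₁ : γ₁ ∈ CircG) (hγ₂ : γ₂ ∈ CircG) : γ₁ ∘ γ₂ ∈ CircG := by
  obtain ⟨smooth₁, deriv_pos₁, map_add₁, map_pi₁⟩ := hγ₁
  obtain ⟨smooth₂, deriv_pos₂, map_add₂, map_pi₂⟩ := hγ₂
  refine ⟨smooth₁.comp smooth₂, fun θ ↦ ?_, fun θ ↦ ?_, ?_⟩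
  · rw [deriv_comp θ (differentiableAt_of_deriv_ne_zero (deriv_pos₁ _).ne')
      (differentiableAt_of_deriv_ne_zero (deriv_pos₂ _).ne')]
    exact mul_pos (deriv_pos₁ _) (deriv_pos₂ _)
  · simp only [comp_apply, map_add₂, map_add₁]
  · simp only [comp_apply, map_pi₂, map_pi₁]

theorem bijective_of_mem_circG (hγ : γ ∈ CircG) : Bijective γ :=
  ⟨(strictMono_of_deriv_pos hγ.2.1).injective,
    surjective_of_continuous_of_map_add_const hγ.1.continuous Real.two_pi_pos hγ.2.2.1⟩

theorem mem_circG_of_rightInverse (hγ : γ ∈ CircG) (hδ : RightInverse δ γ) : δ ∈ CircG := by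
  have injective_γ : Injective γ := (bijective_of_mem_circG hγ).injective
  obtain ⟨smooth, deriv_pos, map_add, map_pi⟩ := hγ
  have smooth_δ := contDiff_of_rightInverse_of_deriv_pos smooth deriv_pos hδ
  refine ⟨smooth_δ, deriv_pos_of_rightInverse deriv_pos smooth_δ.continuous hδ, fun θ ↦ ?_, ?_⟩
  · exact injective_γ (by rw [hδ, map_add, hδ])
  · exact injective_γ (by rw [hδ, map_pi])

end CircG

section CircB

variable {n : ℕ} {γ γ₀ γ₁ γ₂ δ δ₀ : ℝ → ℝ}

theorem mem_circB_iff_jetEq_id (hn : 1 ≤ n) : γ ∈ CircB n ↔ γ ∈ CircG ∧ JetEq n γ id π := by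
  refine and_congr_right fun hγ ↦ ⟨fun ⟨deriv_one, higher⟩ k hk ↦ ?_, fun jet ↦ ⟨?_, ?_⟩⟩
  · rw [iteratedDeriv_id]
    rcases k with _ | _ | k
    · simpa using map_pi_of_mem_circG hγ
    · simpa using deriv_one
    · simpa using higher (k + 2) (by omega) hk
  · simpa using jet 1 hn
  · intro k two_le hk
    rw [jet k hk, iteratedDeriv_id, if_neg (by omega), if_neg (by omega)]

theorem id_mem_circB (hn : 1 ≤ n) : id ∈ CircB n :=
  (mem_circB_iff_jetEq_id hn).mpr ⟨id_mem_circG, .refl n id π⟩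

theorem comp_mem_circB (hn : 1 ≤ n) (hγ₁ : γ₁ ∈ CircB n) (hγ₂ : γ₂ ∈ CircB n) :
    γ₁ ∘ γ₂ ∈ CircB n := by
  rw [mem_circB_iff_jetEq_id hn] at hγ₁ hγ₂ ⊢
  obtain ⟨mem₁, jet₁⟩ := hγ₁
  obtain ⟨mem₂, jet₂⟩ := hγ₂
  have jet₁_at : JetEq n γ₁ id (γ₂ π) := (map_pi_of_mem_circG mem₂).symm ▸ jet₁
  exact ⟨comp_mem_circG mem₁ mem₂, jet₁_at.comp jet₂ (contDiff_of_mem_circG mem₁ n).contDiffAt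
    contDiffAt_id (contDiff_of_mem_circG mem₂ n).contDiffAt contDiffAt_id⟩

theorem mem_circB_of_rightInverse (hn : 1 ≤ n) (hγ : γ ∈ CircB n) (hδ : RightInverse δ γ) :
    δ ∈ CircB n := by
  rw [mem_circB_iff_jetEq_id hn] at hγ ⊢
  obtain ⟨mem, jet⟩ := hγ
  have mem_δ : δ ∈ CircG := mem_circG_of_rightInverse mem hδ
  have leftInverse_δ : LeftInverse δ γ :=
    LeftInverse.rightInverse_of_injective hδ (bijective_of_mem_circG mem).injective
  exact ⟨mem_δ, jet.id_of_leftInverse (contDiff_of_mem_circG mem n).contDiffAt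
    (contDiff_of_mem_circG mem_δ n).contDiffAt leftInverse_δ⟩

theorem conj_mem_circB (hn : 1 ≤ n) (hγ : γ ∈ CircB n) (hγ₀ : γ₀ ∈ CircG)
    (hδ₀ : RightInverse δ₀ γ₀) : γ₀ ∘ γ ∘ δ₀ ∈ CircB n := by
  rw [mem_circB_iff_jetEq_id hn] at hγ ⊢
  obtain ⟨mem, jet⟩ := hγ
  have mem_δ₀ : δ₀ ∈ CircG := mem_circG_of_rightInverse hγ₀ hδ₀
  have jet_at : JetEq n γ id (δ₀ π) := (map_pi_of_mem_circG mem_δ₀).symm ▸ jet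
  exact ⟨comp_mem_circG hγ₀ (comp_mem_circG mem mem_δ₀),
    jet_at.conj_id (contDiff_of_mem_circG mem n).contDiffAt (contDiff_of_mem_circG hγ₀ n).contDiffAt
      (contDiff_of_mem_circG mem_δ₀ n).contDiffAt hδ₀⟩

end CircB

/-- Appendix A: (i) `CircG` is a group under composition (each element is a bijection of
`ℝ` whose inverse lies again in `CircG`); (ii) each `B_n` is a subgroup; (iii) `B_n` is
normal in `CircG`. -/
theorem stmt_15 :
    ((id : ℝ → ℝ) ∈ CircG ∧
      (∀ γ₁ ∈ CircG, ∀ γ₂ ∈ CircG, γ₁ ∘ γ₂ ∈ CircG) ∧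
      (∀ γ ∈ CircG, Function.Bijective γ ∧
        ∃ δ ∈ CircG, Function.LeftInverse δ γ ∧ Function.RightInverse δ γ))
    ∧ (∀ n : ℕ, 1 ≤ n →
        (id : ℝ → ℝ) ∈ CircB n ∧
        (∀ γ₁ ∈ CircB n, ∀ γ₂ ∈ CircB n, γ₁ ∘ γ₂ ∈ CircB n) ∧
        (∀ γ ∈ CircB n, ∀ δ : ℝ → ℝ,
          Function.LeftInverse δ γ → Function.RightInverse δ γ → δ ∈ CircB n))
    ∧ (∀ n : ℕ, 1 ≤ n → ∀ γ ∈ CircB n, ∀ γ₀ ∈ CircG, ∀ δ₀ : ℝ → ℝ,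
        Function.LeftInverse δ₀ γ₀ → Function.RightInverse δ₀ γ₀ →
        γ₀ ∘ γ ∘ δ₀ ∈ CircB n) := by
  refine ⟨⟨id_mem_circG, fun _ h₁ _ h₂ ↦ comp_mem_circG h₁ h₂, fun γ hγ ↦ ?_⟩,
    fun n hn ↦ ⟨id_mem_circB hn, fun _ h₁ _ h₂ ↦ comp_mem_circB hn h₁ h₂,
      fun _ hγ _ _ hr ↦ mem_circB_of_rightInverse hn hγ hr⟩,
    fun n hn _ hγ _ hγ₀ _ _ hr ↦ conj_mem_circB hn hγ hγ₀ hr⟩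
  have bijective_γ : Bijective γ := bijective_of_mem_circG hγ
  obtain ⟨δ, hl, hr⟩ := bijective_iff_has_inverse.mp bijective_γ
  exact ⟨bijective_γ, δ, mem_circG_of_rightInverse hγ hr, hl, hr⟩
end

section
/- For 2π-periodic smooth functions f, g : ℝ → ℝ define the bracket [f,g] = f'·g − f·g'. Let k ≥ 1 and let f₁, …, f_k be 2π-periodic smooth functions with f_i(π) = 0 and f_i'(π) = 0 for every i. Then the iterated bracket h = [f₁,[f₂,[…,[f_{k−1},f_k]…]]] satisfies h^{(j)}(π) = 0 for all 0 ≤ j ≤ k. -/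
open scoped Real

/-- The Lie bracket of vector fields on the circle: `[f,g] = f'·g - f·g'`. -/
noncomputable def vbracket (f g : ℝ → ℝ) : ℝ → ℝ :=
  fun θ => deriv f θ * g θ - f θ * deriv g θ

/-- The iterated bracket `[f₀,[f₁,[…,[f_{m-1},f_m]…]]]` of `m+1` functions. -/
noncomputable def iterBracket : (m : ℕ) → (Fin (m + 1) → ℝ → ℝ) → ℝ → ℝ
  | 0, f => f 0
  | m + 1, f => vbracket (f 0) (iterBracket m fun i => f i.succ)

/-!
Assign to a function the order to which it vanishes at the base point. By the Leibniz rule this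
order is additive under products, and differentiating lowers it by at most one, so the bracket of
functions vanishing to orders `p` and `q` vanishes to order `p + q - 1`. Bracketing with a function
that vanishes to order `2` thus raises the order by one.
-/

/-- `f` vanishes to order `n` at `x`: its first `n` derivatives, those of order `0, …, n - 1`,
are zero at `x`. For periodic smooth functions and `x = π`, order `k + 1` is membership in `𝔟_k`. -/
def VanishesToOrder {𝕜 F : Type*} [NontriviallyNormedField 𝕜] [NormedAddCommGroup F]
    [NormedSpace 𝕜 F] (f : 𝕜 → F) (n : ℕ) (x : 𝕜) : Prop :=
  ∀ j < n, iteratedDeriv j f x = 0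

section VanishesToOrder

variable {𝕜 F 𝔸 : Type*} [NontriviallyNormedField 𝕜] [NormedAddCommGroup F] [NormedSpace 𝕜 F]
  [NormedRing 𝔸] [NormedAlgebra 𝕜 𝔸] {x : 𝕜} {p q n : ℕ}

theorem vanishesToOrder_two_iff {f : 𝕜 → F} :
    VanishesToOrder f 2 x ↔ f x = 0 ∧ deriv f x = 0 := by
  simp only [VanishesToOrder, Nat.forall_lt_succ_right, Nat.not_lt_zero, IsEmpty.forall_iff,
    implies_true, true_and, iteratedDeriv_zero, iteratedDeriv_one]

protected theorem VanishesToOrder.mono {f : 𝕜 → F} (hf : VanishesToOrder f n x) (hpn : p ≤ n) :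
    VanishesToOrder f p x :=
  fun j hj => hf j (hj.trans_le hpn)

protected theorem VanishesToOrder.deriv {f : 𝕜 → F} (hf : VanishesToOrder f n x) :
    VanishesToOrder (deriv f) (n - 1) x := by
  intro j hj
  rw [← iteratedDeriv_succ']
  exact hf (j + 1) (Nat.add_lt_of_lt_sub hj)

protected theorem VanishesToOrder.sub {f g : 𝕜 → F} (hf : VanishesToOrder f n x)
    (hg : VanishesToOrder g n x) (hfs : ContDiffAt 𝕜 (n - 1 : ℕ) f x)
    (hgs : ContDiffAt 𝕜 (n - 1 : ℕ) g x) : VanishesToOrder (f - g) n x := by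
  intro j hj
  have hjn : (j : WithTop ℕ∞) ≤ (n - 1 : ℕ) := mod_cast Nat.le_sub_one_of_lt hj
  rw [iteratedDeriv_sub (hfs.of_le hjn) (hgs.of_le hjn), hf j hj, hg j hj, sub_zero]

protected theorem VanishesToOrder.mul {f g : 𝕜 → 𝔸} (hf : VanishesToOrder f p x)
    (hg : VanishesToOrder g q x) (hfs : ContDiffAt 𝕜 (p + q - 1 : ℕ) f x)
    (hgs : ContDiffAt 𝕜 (p + q - 1 : ℕ) g x) : VanishesToOrder (f * g) (p + q) x := by
  intro j hj
  have hjpq : (j : WithTop ℕ∞) ≤ (p + q - 1 : ℕ) := mod_cast Nat.le_sub_one_of_lt hj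
  rw [iteratedDeriv_mul (hfs.of_le hjpq) (hgs.of_le hjpq)]
  refine Finset.sum_eq_zero fun i hi => ?_
  rcases lt_or_ge i p with hip | hpi
  · rw [hf i hip, mul_zero, zero_mul]
  · have hij : i ≤ j := Finset.mem_range_succ_iff.1 hi
    rw [hg (j - i) (by lia), mul_zero]

theorem contDiffAt_deriv {f : 𝕜 → F} {k l : WithTop ℕ∞} (hf : ContDiffAt 𝕜 l f x)
    (hkl : k + 1 ≤ l) : ContDiffAt 𝕜 k (deriv f) x := by
  simpa only [fderiv_apply_one_eq_deriv] using
    (hf.fderiv_right hkl).clm_apply (contDiffAt_const (c := (1 : 𝕜)))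

end VanishesToOrder

section Bracket

open scoped ContDiff

variable {x : ℝ}

theorem contDiffAt_vbracket {f g : ℝ → ℝ} {k l : WithTop ℕ∞} (hf : ContDiffAt ℝ l f x)
    (hg : ContDiffAt ℝ l g x) (hkl : k + 1 ≤ l) : ContDiffAt ℝ k (vbracket f g) x :=
  have hk : k ≤ l := le_self_add.trans hkl
  ((contDiffAt_deriv hf hkl).mul (hg.of_le hk)).sub ((hf.of_le hk).mul (contDiffAt_deriv hg hkl))

theorem contDiffAt_iterBracket {m : ℕ} {f : Fin (m + 1) → ℝ → ℝ}
    (hf : ∀ i, ContDiffAt ℝ ∞ (f i) x) : ContDiffAt ℝ ∞ (iterBracket m f) x := by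
  induction m with
  | zero => exact hf 0
  | succ m ih => exact contDiffAt_vbracket (hf 0) (ih fun i => hf i.succ) le_rfl

protected theorem VanishesToOrder.vbracket {f g : ℝ → ℝ} {p q : ℕ} (hf : VanishesToOrder f p x)
    (hg : VanishesToOrder g q x) (hfs : ContDiffAt ℝ ∞ f x) (hgs : ContDiffAt ℝ ∞ g x) :
    VanishesToOrder (vbracket f g) (p + q - 1) x := by
  have hfs' : ContDiffAt ℝ ∞ (deriv f) x := contDiffAt_deriv hfs le_rfl
  have hgs' : ContDiffAt ℝ ∞ (deriv g) x := contDiffAt_deriv hgs le_rfl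
  have le_infty (n : ℕ) : (n : WithTop ℕ∞) ≤ ∞ := mod_cast le_top
  have h_left : VanishesToOrder (deriv f * g) (p - 1 + q) x :=
    hf.deriv.mul hg (hfs'.of_le (le_infty _)) (hgs.of_le (le_infty _))
  have h_right : VanishesToOrder (f * deriv g) (p + (q - 1)) x :=
    hf.mul hg.deriv (hfs.of_le (le_infty _)) (hgs'.of_le (le_infty _))
  exact (h_left.mono (by lia)).sub (h_right.mono (by lia))
    ((hfs'.mul hgs).of_le (le_infty _)) ((hfs.mul hgs').of_le (le_infty _))

theorem stmt_16_general {m : ℕ} {f : Fin (m + 1) → ℝ → ℝ} {n : Fin (m + 1) → ℕ}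
    (hfs : ∀ i, ContDiffAt ℝ ∞ (f i) x) (hf : ∀ i, VanishesToOrder (f i) (n i) x) :
    VanishesToOrder (iterBracket m f) (∑ i, n i - m) x := by
  induction m with
  | zero => simpa [iterBracket] using hf 0
  | succ m ih =>
    have h_tail := ih (fun i => hfs i.succ) (fun i => hf i.succ)
    have h_bracket := (hf 0).vbracket h_tail (hfs 0) (contDiffAt_iterBracket fun i => hfs i.succ)
    refine h_bracket.mono ?_
    rw [Fin.sum_univ_succ]
    lia

end Bracket

/-- Iterated brackets of length `k = m+1` of `2π`-periodic smooth functions vanishing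
with their first derivative at `π` have all derivatives up to order `k` vanishing
at `π` (i.e. brackets of length `k` of elements of `𝔟₁` lie in `𝔟_k`). -/
theorem stmt_16 (m : ℕ) (f : Fin (m + 1) → ℝ → ℝ)
    (hsm : ∀ i, ContDiff ℝ (⊤ : ℕ∞) (f i))
    (hper : ∀ i, ∀ θ : ℝ, f i (θ + 2 * π) = f i θ)
    (hval : ∀ i, f i π = 0) (hder : ∀ i, deriv (f i) π = 0) :
    ∀ j : ℕ, j ≤ m + 1 → iteratedDeriv j (iterBracket m f) π = 0 := by
  have hf (i) : VanishesToOrder (f i) 2 π := vanishesToOrder_two_iff.2 ⟨hval i, hder i⟩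
  exact fun j hj => stmt_16_general (fun i => (hsm i).contDiffAt) hf j
    (by rw [Fin.sum_const, smul_eq_mul]; lia)
end
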